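/- There exists a constant c₀ > 0 such that for each 0 < δ ≤ 1/2 there exists a smooth function χ_δ : [0, ∞) → ℝ with: (i) χ_δ(t) = t for t near 0, χ_δ(t) = 0 for t ≥ √δ, and 0 ≤ χ_δ(t) ≤ δ/2 for all t; (ii) |χ_δ'(t)| ≤ c₀ for all t; (iii) −2/δ ≤ χ_δ''(t) ≤ 0 for all t ∈ [0, δ] and |χ_δ''(t)| ≤ c₀ for all t ∈ [δ, √δ]. -/

import Mathlib

/-!
`χ_δ(t) = δ f(t/δ) η(t/√δ)`, where `η` is a cutoff and `f` is a concave ramp: the identity near `0`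
and the constant `1/2` near `[1, ∞)`. Taking for `-f''` a probability density on `(0, 1)` that is
symmetric about `1/2` makes the limiting value of `f` equal to the mean `1/2`, and bumps with a long
enough plateau keep the density below `2`. On `[0, δ]` the cutoff is not yet active, so only the
ramp contributes to the derivatives; on `[δ, ∞)` the ramp is constant, so only the cutoff does, and
there the scaling `δ / (√δ)² = 1` gives bounds independent of `δ`.
-/

open MeasureTheory Filter Set
open scoped Topology ContDiff

section Calculus

lemma contDiff_intervalIntegral_right {E : Type*} [NormedAddCommGroup E] [NormedSpace ℝ E]
    [CompleteSpace E] {g : ℝ → E} (hg : ContDiff ℝ ∞ g) (a : ℝ) :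
    ContDiff ℝ ∞ fun x ↦ ∫ y in a..x, g y := by
  refine contDiff_infty_iff_deriv.2 ⟨fun x ↦ ?_, ?_⟩
  · exact (hg.continuous.integral_hasStrictDerivAt a x).hasDerivAt.differentiableAt
  · rwa [funext fun x ↦ hg.continuous.deriv_integral g a x]

lemma deriv_const_mul_comp_div {𝕜 : Type*} [NontriviallyNormedField 𝕜] (a c : 𝕜) (g : 𝕜 → 𝕜) :
    deriv (fun t ↦ a * g (t / c)) = fun t ↦ a / c * deriv g (t / c) := by
  funext t
  have h := deriv_comp_mul_left c⁻¹ g t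
  simp only [smul_eq_mul, inv_mul_eq_div] at h
  rw [deriv_const_mul_field, h]
  ring

lemma exists_abs_deriv_le_and_abs_deriv_deriv_le {g : ℝ → ℝ} (hg : ContDiff ℝ ∞ g)
    (hsupp : HasCompactSupport g) :
    ∃ C, (∀ x, |deriv g x| ≤ C) ∧ ∀ x, |deriv (deriv g) x| ≤ C := by
  have hg' := (contDiff_infty_iff_deriv.1 hg).2
  have hg'' := (contDiff_infty_iff_deriv.1 hg').2
  obtain ⟨A, hA⟩ := hsupp.deriv.exists_bound_of_continuous hg'.continuous
  obtain ⟨B, hB⟩ := hsupp.deriv.deriv.exists_bound_of_continuous hg''.continuous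
  exact ⟨max A B, fun x ↦ (hA x).trans (le_max_left A B), fun x ↦ (hB x).trans (le_max_right A B)⟩

lemma contDiffBump_normed_le {c : ℝ} (b : ContDiffBump c) (x : ℝ) :
    b.normed volume x ≤ 1 / (2 * b.rIn) := by
  simpa only [Real.volume_real_closedBall b.rIn_pos.le] using
    b.normed_le_div_measure_closedBall_rIn volume x

end Calculus

section Ramp

/-- The slope of the concave ramp: the tail on `[s, 1]` of the probability density given by the
normalized bump `b`, which is symmetric about `1/2`. It is meant for `b.rOut ≤ 1/2`, so that all the
mass lies in `[0, 1]`. -/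
noncomputable def rampSlope (b : ContDiffBump (1 / 2 : ℝ)) (s : ℝ) : ℝ :=
  ∫ y in s..1, b.normed volume y

/-- The concave ramp, which rises from `0` with slope `1` and levels off at height `1/2`; it is the
model for `χ_δ` on `[0, δ]`, rescaled to `[0, 1]`. -/
noncomputable def ramp (b : ContDiffBump (1 / 2 : ℝ)) (s : ℝ) : ℝ :=
  ∫ u in 0..s, rampSlope b u

variable {b : ContDiffBump (1 / 2 : ℝ)} {s : ℝ}

lemma contDiff_rampSlope : ContDiff ℝ ∞ (rampSlope b) := by
  have hsymm : rampSlope b = fun s ↦ -∫ y in 1..s, b.normed volume y :=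
    funext fun s ↦ intervalIntegral.integral_symm 1 s
  rw [hsymm]
  exact (contDiff_intervalIntegral_right b.contDiff_normed 1).neg

lemma contDiff_ramp : ContDiff ℝ ∞ (ramp b) :=
  contDiff_intervalIntegral_right contDiff_rampSlope 0

lemma deriv_ramp : deriv (ramp b) = rampSlope b :=
  funext fun s ↦ contDiff_rampSlope.continuous.deriv_integral _ 0 s

lemma deriv_rampSlope : deriv (rampSlope b) = fun s ↦ -b.normed volume s :=
  funext fun s ↦ intervalIntegral.deriv_integral_left
    (b.continuous_normed.intervalIntegrable s 1)
    (b.continuous_normed.stronglyMeasurableAtFilter _ _) b.continuous_normed.continuousAt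

lemma intervalIntegrable_rampSlope (x y : ℝ) : IntervalIntegrable (rampSlope b) volume x y :=
  contDiff_rampSlope.continuous.intervalIntegrable x y

lemma antitone_rampSlope : Antitone (rampSlope b) := by
  refine antitone_of_deriv_nonpos (contDiff_rampSlope.differentiable (by simp)) fun s ↦ ?_
  rw [deriv_rampSlope]
  exact neg_nonpos.2 (b.nonneg_normed s)

lemma rampSlope_eq_one (hb : b.rOut ≤ 1 / 2) (hs : s ≤ 1 / 2 - b.rOut) : rampSlope b s = 1 := by
  rw [rampSlope, intervalIntegral.integral_eq_integral_of_support_subset, b.integral_normed]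
  rw [b.support_normed_eq, Real.ball_eq_Ioo]
  exact fun y hy ↦ ⟨by linarith [hy.1], by linarith [hy.2]⟩

lemma rampSlope_one_sub (hb : b.rOut ≤ 1 / 2) (s : ℝ) :
    rampSlope b (1 - s) = 1 - rampSlope b s := by
  have hsymm (y : ℝ) : b.normed volume (1 - y) = b.normed volume y := by
    convert b.normed_sub (μ := volume) (y - 1 / 2) using 2 <;> ring
  have hreflect : rampSlope b (1 - s) = ∫ y in 0..s, b.normed volume y := by
    have h := intervalIntegral.integral_comp_sub_left (a := 0) (b := s) (b.normed volume) 1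
    simpa only [rampSlope, hsymm, sub_zero] using h.symm
  have hsplit : (∫ y in 0..s, b.normed volume y) + rampSlope b s = rampSlope b 0 :=
    intervalIntegral.integral_add_adjacent_intervals
      (b.continuous_normed.intervalIntegrable 0 s) (b.continuous_normed.intervalIntegrable s 1)
  have hzero : rampSlope b 0 = 1 := rampSlope_eq_one hb (sub_nonneg.2 hb)
  linarith

lemma rampSlope_mem_Icc (hb : b.rOut ≤ 1 / 2) (s : ℝ) : rampSlope b s ∈ Icc 0 1 := by
  have hle_one (x : ℝ) : rampSlope b x ≤ 1 :=
    (antitone_rampSlope (min_le_left x (1 / 2 - b.rOut))).trans_eq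
      (rampSlope_eq_one hb (min_le_right _ _))
  exact ⟨by linarith [hle_one (1 - s), rampSlope_one_sub hb s], hle_one s⟩

lemma ramp_eq_self (hb : b.rOut ≤ 1 / 2) (hs : s ≤ 1 / 2 - b.rOut) : ramp b s = s := by
  have hslope : EqOn (rampSlope b) 1 (uIcc 0 s) := fun u hu ↦
    rampSlope_eq_one hb (hu.2.trans (max_le (sub_nonneg.2 hb) hs))
  rw [ramp, intervalIntegral.integral_congr hslope]
  simp

lemma ramp_sub_ramp_one_sub (hb : b.rOut ≤ 1 / 2) (s : ℝ) :
    ramp b s - ramp b (1 - s) = s - 1 / 2 := by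
  have hsplit : ramp b s - ramp b (1 - s) = ∫ u in (1 - s)..s, rampSlope b u :=
    intervalIntegral.integral_interval_sub_left
      (intervalIntegrable_rampSlope 0 s) (intervalIntegrable_rampSlope 0 (1 - s))
  have hreflect : ∫ u in (1 - s)..s, rampSlope b u = ∫ u in (1 - s)..s, (1 - rampSlope b u) := by
    have h := intervalIntegral.integral_comp_sub_left (a := 1 - s) (b := s) (rampSlope b) 1
    simpa only [rampSlope_one_sub hb, sub_sub_cancel] using h.symm
  rw [intervalIntegral.integral_sub intervalIntegrable_const (intervalIntegrable_rampSlope _ _),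
    intervalIntegral.integral_const, smul_eq_mul, mul_one] at hreflect
  linarith

lemma ramp_eq_half (hb : b.rOut ≤ 1 / 2) (hs : 1 / 2 + b.rOut ≤ s) : ramp b s = 1 / 2 := by
  have hself : ramp b (1 - s) = 1 - s := ramp_eq_self hb (by linarith)
  linarith [ramp_sub_ramp_one_sub hb s]

lemma monotone_ramp (hb : b.rOut ≤ 1 / 2) : Monotone (ramp b) := by
  refine monotone_of_deriv_nonneg (contDiff_ramp.differentiable (by simp)) fun s ↦ ?_
  rw [deriv_ramp]
  exact (rampSlope_mem_Icc hb s).1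

lemma ramp_mem_Icc (hb : b.rOut ≤ 1 / 2) (hs : 0 ≤ s) : ramp b s ∈ Icc 0 (1 / 2) := by
  refine ⟨(ramp_eq_self hb (sub_nonneg.2 hb)).symm.trans_le (monotone_ramp hb hs), ?_⟩
  calc ramp b s ≤ ramp b (max s (1 / 2 + b.rOut)) := monotone_ramp hb (le_max_left _ _)
    _ = 1 / 2 := ramp_eq_half hb (le_max_right _ _)

end Ramp

section BumpChi

/-- The function `χ_δ`: the ramp at scale `δ`, cut off at the larger scale `√δ`. -/
noncomputable def bumpChi (b : ContDiffBump (1 / 2 : ℝ)) (η : ContDiffBump (0 : ℝ)) (δ t : ℝ) : ℝ :=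
  δ * ramp b (t / δ) * η (t / √δ)

variable {b : ContDiffBump (1 / 2 : ℝ)} {η : ContDiffBump (0 : ℝ)} {δ t : ℝ}

lemma contDiff_bumpChi : ContDiff ℝ ∞ (bumpChi b η δ) :=
  (contDiff_const.mul (contDiff_ramp.comp (contDiff_id.div_const δ))).mul
    (η.contDiff.comp (contDiff_id.div_const √δ))

lemma bumpChi_eq_zero (hδ : 0 < δ) (ht : η.rOut * √δ ≤ t) : bumpChi b η δ t = 0 := by
  have hη : η (t / √δ) = 0 := by
    refine η.zero_of_le_dist ?_
    rw [dist_zero_right]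
    exact ((le_div_iff₀ (Real.sqrt_pos.2 hδ)).2 ht).trans (le_abs_self _)
  rw [bumpChi, hη, mul_zero]

lemma bumpChi_mem_Icc (hb : b.rOut ≤ 1 / 2) (hδ : 0 ≤ δ) (ht : 0 ≤ t) :
    bumpChi b η δ t ∈ Icc 0 (δ / 2) := by
  obtain ⟨hramp_nonneg, hramp_le⟩ := ramp_mem_Icc hb (div_nonneg ht hδ)
  refine ⟨mul_nonneg (mul_nonneg hδ hramp_nonneg) η.nonneg, ?_⟩
  calc bumpChi b η δ t ≤ δ * ramp b (t / δ) :=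
        mul_le_of_le_one_right (mul_nonneg hδ hramp_nonneg) η.le_one
    _ ≤ δ * (1 / 2) := mul_le_mul_of_nonneg_left hramp_le hδ
    _ = δ / 2 := mul_one_div δ 2

lemma bumpChi_eventuallyEq_ramp (hη : √δ < η.rIn) (ht : t ∈ Icc 0 δ) :
    bumpChi b η δ =ᶠ[𝓝 t] fun u ↦ δ * ramp b (u / δ) := by
  have hmem : t / √δ ∈ Metric.ball 0 η.rIn := by
    rw [mem_ball_zero_iff, Real.norm_of_nonneg (div_nonneg ht.1 δ.sqrt_nonneg)]
    calc t / √δ ≤ δ / √δ := div_le_div_of_nonneg_right ht.2 δ.sqrt_nonneg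
      _ = √δ := Real.div_sqrt
      _ < η.rIn := hη
  have hη_one : ∀ᶠ u in 𝓝 t, η (u / √δ) = 1 :=
    (continuous_id'.div_const √δ).continuousAt.eventually (η.eventuallyEq_one_of_mem_ball hmem)
  filter_upwards [hη_one] with u hu
  rw [bumpChi, hu, mul_one]

lemma bumpChi_eventuallyEq_cutoff (hb : b.rOut < 1 / 2) (hδ : 0 < δ) (ht : δ ≤ t) :
    bumpChi b η δ =ᶠ[𝓝 t] fun u ↦ δ / 2 * η (u / √δ) := by
  have hlt : 1 / 2 + b.rOut < t / δ := by linarith [(one_le_div hδ).2 ht]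
  filter_upwards [(continuous_id'.div_const δ).continuousAt.eventually_const_lt hlt] with u hu
  rw [bumpChi, ramp_eq_half hb.le hu.le, mul_one_div]

lemma bumpChi_eq_self (hb : b.rOut ≤ 1 / 2) (hδ : 0 < δ) (hη : √δ < η.rIn)
    (ht : t ∈ Icc 0 (δ * (1 / 2 - b.rOut))) : bumpChi b η δ t = t := by
  have hle : δ * (1 / 2 - b.rOut) ≤ δ :=
    mul_le_of_le_one_right hδ.le (by linarith [b.rOut_pos])
  rw [(bumpChi_eventuallyEq_ramp hη ⟨ht.1, ht.2.trans hle⟩).eq_of_nhds,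
    ramp_eq_self hb ((div_le_iff₀' hδ).2 ht.2), mul_div_cancel₀ t hδ.ne']

lemma deriv_bumpChi_of_mem_Icc (hδ : 0 < δ) (hη : √δ < η.rIn) (ht : t ∈ Icc 0 δ) :
    deriv (bumpChi b η δ) t = rampSlope b (t / δ) := by
  simp only [(bumpChi_eventuallyEq_ramp hη ht).deriv_eq, deriv_const_mul_comp_div, deriv_ramp,
    div_self hδ.ne', one_mul]

lemma deriv_deriv_bumpChi_of_mem_Icc (hδ : 0 < δ) (hη : √δ < η.rIn) (ht : t ∈ Icc 0 δ) :
    deriv (deriv (bumpChi b η δ)) t = -(b.normed volume (t / δ) / δ) := by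
  rw [(bumpChi_eventuallyEq_ramp hη ht).deriv.deriv_eq, deriv_const_mul_comp_div,
    deriv_const_mul_comp_div, deriv_ramp, deriv_rampSlope, div_self hδ.ne']
  ring

lemma deriv_bumpChi_of_le (hb : b.rOut < 1 / 2) (hδ : 0 < δ) (ht : δ ≤ t) :
    deriv (bumpChi b η δ) t = √δ / 2 * deriv η (t / √δ) := by
  rw [(bumpChi_eventuallyEq_cutoff hb hδ ht).deriv_eq, deriv_const_mul_comp_div, div_right_comm,
    Real.div_sqrt]

lemma deriv_deriv_bumpChi_of_le (hb : b.rOut < 1 / 2) (hδ : 0 < δ) (ht : δ ≤ t) :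
    deriv (deriv (bumpChi b η δ)) t = 1 / 2 * deriv (deriv η) (t / √δ) := by
  rw [(bumpChi_eventuallyEq_cutoff hb hδ ht).deriv.deriv_eq, deriv_const_mul_comp_div,
    deriv_const_mul_comp_div, div_right_comm δ, Real.div_sqrt, div_right_comm,
    div_self (Real.sqrt_pos.2 hδ).ne']

lemma abs_deriv_bumpChi_le (hb : b.rOut < 1 / 2) (hδ : 0 < δ) (hδ1 : δ ≤ 1) (hη : √δ < η.rIn)
    {C : ℝ} (hC : ∀ x, |deriv η x| ≤ C) (ht : 0 ≤ t) : |deriv (bumpChi b η δ) t| ≤ 1 + C := by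
  have hC_nonneg : 0 ≤ C := (abs_nonneg _).trans (hC 0)
  obtain htδ | htδ := le_total t δ
  · obtain ⟨hslope_nonneg, hslope_le⟩ := rampSlope_mem_Icc hb.le (t / δ)
    rw [deriv_bumpChi_of_mem_Icc hδ hη ⟨ht, htδ⟩, abs_of_nonneg hslope_nonneg]
    linarith
  · have hcoeff : √δ / 2 ≤ 1 := by linarith [Real.sqrt_le_one.2 hδ1]
    rw [deriv_bumpChi_of_le hb hδ htδ, abs_mul, abs_of_nonneg (by positivity)]
    calc √δ / 2 * |deriv η (t / √δ)| ≤ 1 * C := by gcongr; exact hC _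
      _ ≤ 1 + C := by linarith

lemma deriv_deriv_bumpChi_mem_Icc (hδ : 0 < δ) (hη : √δ < η.rIn) (ht : t ∈ Icc 0 δ) :
    deriv (deriv (bumpChi b η δ)) t ∈ Icc (-(1 / (2 * b.rIn) / δ)) 0 := by
  rw [deriv_deriv_bumpChi_of_mem_Icc hδ hη ht]
  exact ⟨neg_le_neg (div_le_div_of_nonneg_right (contDiffBump_normed_le b _) hδ.le),
    neg_nonpos.2 (div_nonneg (b.nonneg_normed _) hδ.le)⟩

lemma abs_deriv_deriv_bumpChi_le (hb : b.rOut < 1 / 2) (hδ : 0 < δ) {C : ℝ}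
    (hC : ∀ x, |deriv (deriv η) x| ≤ C) (ht : δ ≤ t) :
    |deriv (deriv (bumpChi b η δ)) t| ≤ C / 2 := by
  rw [deriv_deriv_bumpChi_of_le hb hδ ht, abs_mul, abs_of_pos one_half_pos, one_div_mul_eq_div]
  exact div_le_div_of_nonneg_right (hC _) zero_le_two

end BumpChi

-- No `χ` exists for `1 ≤ δ`: it would be concave on `[0, √δ]` with `χ(√δ) = χ'(√δ) = 0`, hence
-- nonpositive there.
theorem exists_bump_chi_general {δ₁ : ℝ} (hδ₁ : δ₁ < 1) :
    ∃ c₀ : ℝ, 0 < c₀ ∧ ∀ δ : ℝ, 0 < δ → δ ≤ δ₁ →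
      ∃ χ : ℝ → ℝ, ContDiff ℝ ∞ χ ∧
        (∃ ε > 0, ∀ t ∈ Ico 0 ε, χ t = t) ∧
        (∀ t, √δ ≤ t → χ t = 0) ∧
        (∀ t, 0 ≤ t → 0 ≤ χ t ∧ χ t ≤ δ / 2) ∧
        (∀ t, 0 ≤ t → |deriv χ t| ≤ c₀) ∧
        (∀ t ∈ Icc 0 δ, -(2 / δ) ≤ deriv (deriv χ) t ∧ deriv (deriv χ) t ≤ 0) ∧
        (∀ t ∈ Icc δ √δ, |deriv (deriv χ) t| ≤ c₀) := by
  have hsqrt_lt : √δ₁ < 1 := (Real.sqrt_lt' one_pos).2 (by simpa using hδ₁)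
  let b : ContDiffBump (1 / 2 : ℝ) := ⟨1 / 4, 3 / 8, by norm_num, by norm_num⟩
  let η : ContDiffBump (0 : ℝ) := ⟨(√δ₁ + 1) / 2, 1, by positivity, by linarith⟩
  have hb : b.rOut < 1 / 2 := show (3 / 8 : ℝ) < 1 / 2 by norm_num
  obtain ⟨C, hC, hC'⟩ := exists_abs_deriv_le_and_abs_deriv_deriv_le η.contDiff η.hasCompactSupport
  have hC_nonneg : 0 ≤ C := (abs_nonneg _).trans (hC 0)
  refine ⟨1 + C, by positivity, fun δ hδ hδδ₁ ↦ ⟨bumpChi b η δ, contDiff_bumpChi, ?_⟩⟩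
  have hη : √δ < η.rIn := show √δ < (√δ₁ + 1) / 2 by linarith [Real.sqrt_le_sqrt hδδ₁]
  refine ⟨⟨δ * (1 / 2 - b.rOut), mul_pos hδ (sub_pos.2 hb), fun t ht ↦
      bumpChi_eq_self hb.le hδ hη (Ico_subset_Icc_self ht)⟩,
    fun t ht ↦ bumpChi_eq_zero hδ ((one_mul √δ).trans_le ht),
    fun t ht ↦ bumpChi_mem_Icc hb.le hδ.le ht,
    fun t ht ↦ abs_deriv_bumpChi_le hb hδ (hδδ₁.trans hδ₁.le) hη hC ht,
    fun t ht ↦ ?_,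
    fun t ht ↦ (abs_deriv_deriv_bumpChi_le hb hδ hC' ht.1).trans (by linarith)⟩
  have hplateau : 1 / (2 * b.rIn) = 2 := show 1 / (2 * (1 / 4 : ℝ)) = 2 by norm_num
  simpa only [hplateau, mem_Icc] using deriv_deriv_bumpChi_mem_Icc (b := b) hδ hη ht

/-- Existence of the bump functions `χ_δ` (Bär–Hanke): there is a uniform constant
`c₀ > 0` such that for every `0 < δ ≤ 1/2` there is a smooth function `χ_δ` (modelled
as a smooth function on `ℝ`, i.e. extendable beyond `[0, ∞)`) with `χ_δ(t) = t` near
`0`, `χ_δ(t) = 0` for `t ≥ √δ`, `0 ≤ χ_δ ≤ δ/2`, `|χ_δ'| ≤ c₀`,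
`-2/δ ≤ χ_δ'' ≤ 0` on `[0, δ]` and `|χ_δ''| ≤ c₀` on `[δ, √δ]`. -/
theorem exists_bump_chi :
    ∃ c₀ : ℝ, 0 < c₀ ∧ ∀ δ : ℝ, 0 < δ → δ ≤ 1/2 →
      ∃ χ : ℝ → ℝ, ContDiff ℝ (⊤ : ℕ∞) χ ∧
        (∃ ε > (0:ℝ), ∀ t ∈ Set.Ico (0:ℝ) ε, χ t = t) ∧
        (∀ t, Real.sqrt δ ≤ t → χ t = 0) ∧
        (∀ t, 0 ≤ t → 0 ≤ χ t ∧ χ t ≤ δ/2) ∧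
        (∀ t, 0 ≤ t → |deriv χ t| ≤ c₀) ∧
        (∀ t ∈ Set.Icc (0:ℝ) δ, -(2/δ) ≤ deriv (deriv χ) t ∧ deriv (deriv χ) t ≤ 0) ∧
        (∀ t ∈ Set.Icc δ (Real.sqrt δ), |deriv (deriv χ) t| ≤ c₀) :=
  exists_bump_chi_general one_half_lt_one
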